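/- arXiv:2012.00206 — 4 statements merged into one kernel-verified Lean document; each statement's English description precedes it below -/
import Mathlib

section
/- Let x > 0 and x' > 0 be real numbers and let μ be a probability measure on ℝ with μ([−x, x']ᶜ) = 0, satisfying the unbiasedness condition ∫ Δ dμ(Δ) = 0. Then ∫ |Δ| dμ(Δ) ≤ 2·x·x'/(x + x'). -/
open MeasureTheory

/-! On an interval a convex function lies below its chord. The chord is affine, so its expectation
depends only on the mean of the random variable; for `|·|` on `[-x, x']` and mean zero it is the
height `2 x x' / (x + x')` of the chord at the origin. -/

theorem sub_mul_le_chord_of_convexOn {𝕜 : Type*} [Field 𝕜] [LinearOrder 𝕜] [IsStrictOrderedRing 𝕜]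
    {s : Set 𝕜} {f : 𝕜 → 𝕜} {a b t : 𝕜} (hf : ConvexOn 𝕜 s f) (ha : a ∈ s) (hb : b ∈ s)
    (ht : t ∈ Set.Icc a b) :
    (b - a) * f t ≤ (b - t) * f a + (t - a) * f b := by
  obtain ⟨hat, htb⟩ := ht
  rcases hat.eq_or_lt with rfl | hat
  · simp
  rcases htb.eq_or_lt with rfl | htb
  · simp
  have hslope : (f t - f a) / (t - a) ≤ (f b - f t) / (b - t) :=
    hf.slope_mono_adjacent ha hb hat htb
  rw [div_le_div_iff₀ (sub_pos.2 hat) (sub_pos.2 htb)] at hslope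
  linarith

/-- The **Edmundson–Madansky inequality**. -/
theorem sub_mul_integral_le_chord_of_convexOn {Ω : Type*} [MeasurableSpace Ω] {μ : Measure Ω}
    [IsProbabilityMeasure μ] {X : Ω → ℝ} {s : Set ℝ} {f : ℝ → ℝ} {a b : ℝ}
    (hf : ConvexOn ℝ s f) (ha : a ∈ s) (hb : b ∈ s)
    (hmem : ∀ᵐ ω ∂μ, X ω ∈ Set.Icc a b) (hX : Integrable X μ)
    (hfX : Integrable (fun ω ↦ f (X ω)) μ) :
    (b - a) * ∫ ω, f (X ω) ∂μ ≤ (b - ∫ ω, X ω ∂μ) * f a + (∫ ω, X ω ∂μ - a) * f b := by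
  have hleft : Integrable (fun ω ↦ (b - X ω) * f a) μ :=
    ((integrable_const b).sub hX).mul_const _
  have hright : Integrable (fun ω ↦ (X ω - a) * f b) μ :=
    (hX.sub (integrable_const a)).mul_const _
  calc (b - a) * ∫ ω, f (X ω) ∂μ
      = ∫ ω, (b - a) * f (X ω) ∂μ := (integral_const_mul _ _).symm
    _ ≤ ∫ ω, ((b - X ω) * f a + (X ω - a) * f b) ∂μ :=
        integral_mono_ae (hfX.const_mul _) (hleft.add hright) <|
          hmem.mono fun _ ↦ sub_mul_le_chord_of_convexOn hf ha hb
    _ = (b - ∫ ω, X ω ∂μ) * f a + (∫ ω, X ω ∂μ - a) * f b := by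
        rw [integral_add hleft hright, integral_mul_const, integral_mul_const,
          integral_sub (integrable_const b) hX, integral_sub hX (integrable_const a)]
        simp only [integral_const, probReal_univ, one_smul]

/-- For an unbiased wealth transfer `Δ` between agents with wealths `x` and `x'`,
distributed according to a probability measure supported on `[-x, x']` with zero mean,
the expected absolute transfer is at most `2 x x' / (x + x')`. -/
theorem abs_integral_le_of_unbiased (x x' : ℝ) (hx : 0 < x) (hx' : 0 < x')
    (μ : Measure ℝ) [IsProbabilityMeasure μ] (hsupp : μ (Set.Icc (-x) x')ᶜ = 0)
    (hunb : (∫ Δ, Δ ∂μ) = 0) :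
    (∫ Δ, |Δ| ∂μ) ≤ 2 * x * x' / (x + x') := by
  have hmem : ∀ᵐ Δ ∂μ, Δ ∈ Set.Icc (-x) x' := mem_ae_iff.2 hsupp
  have hint : Integrable (fun Δ : ℝ ↦ Δ) μ := .of_mem_Icc (-x) x' aemeasurable_id hmem
  have hconv : ConvexOn ℝ Set.univ (fun Δ : ℝ ↦ |Δ|) := convexOn_univ_norm (E := ℝ)
  have hchord : (x' - -x) * ∫ Δ, |Δ| ∂μ ≤ (x' - ∫ Δ, Δ ∂μ) * |-x| + (∫ Δ, Δ ∂μ - -x) * |x'| :=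
    sub_mul_integral_le_chord_of_convexOn hconv (Set.mem_univ _) (Set.mem_univ _) hmem hint hint.abs
  rw [hunb, abs_neg, abs_of_pos hx, abs_of_pos hx'] at hchord
  rw [le_div_iff₀ (add_pos hx hx')]
  linarith
end

section
/- Let f be a wealth density with mean wealth m > 0, and let ω be an unbiased exchange kernel. Then for every x > 0, the mobility satisfies l(x) ≤ 2m. -/
/-!
An agent receiving `Δ ≤ w` from a partner of wealth `w ≥ 0` has `|Δ| ≤ (w - Δ) + w`, and in an
unbiased exchange the right-hand side has expectation `2 * w`. Averaging over the partners gives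
twice the mean wealth.
-/

open MeasureTheory

section Density

variable {α : Type*} [MeasurableSpace α] {μ : Measure α} {f : α → ℝ}

theorem integral_withDensity_ofReal (hf : AEMeasurable f μ) (hf_nonneg : 0 ≤ᵐ[μ] f) (g : α → ℝ) :
    ∫ a, g a ∂(μ.withDensity fun a => ENNReal.ofReal (f a)) = ∫ a, g a * f a ∂μ := by
  rw [integral_withDensity_eq_integral_toReal_smul₀ hf.ennreal_ofReal (by simp)]
  refine integral_congr_ae (hf_nonneg.mono fun a ha => ?_)
  simp only [ENNReal.toReal_ofReal ha, smul_eq_mul, mul_comm]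

theorem integrable_withDensity_ofReal_iff (hf : AEMeasurable f μ) (hf_nonneg : 0 ≤ᵐ[μ] f)
    {g : α → ℝ} :
    Integrable g (μ.withDensity fun a => ENNReal.ofReal (f a)) ↔
      Integrable (fun a => g a * f a) μ := by
  rw [integrable_withDensity_iff_integrable_smul₀' hf.ennreal_ofReal (by simp)]
  refine integrable_congr (hf_nonneg.mono fun a ha => ?_)
  simp only [ENNReal.toReal_ofReal ha, smul_eq_mul, mul_comm]

end Density

theorem integral_abs_le_two_mul_of_integral_eq_zero {Ω : Type*} [MeasurableSpace Ω]
    {μ : Measure Ω} [IsProbabilityMeasure μ] {X : Ω → ℝ} {b : ℝ} (hX : Integrable X μ)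
    (hXb : ∀ᵐ a ∂μ, X a ≤ b) (hmean : ∫ a, X a ∂μ = 0) :
    ∫ a, |X a| ∂μ ≤ 2 * b := by
  have hb : 0 ≤ b := by
    simpa [hmean] using integral_mono_ae hX (integrable_const b) hXb
  calc ∫ a, |X a| ∂μ ≤ ∫ a, (2 * b - X a) ∂μ := by
        refine integral_mono_ae hX.abs ((integrable_const _).sub hX) ?_
        filter_upwards [hXb] with a ha
        exact abs_le.mpr ⟨by linarith, by linarith⟩
    _ = 2 * b := by simp [integral_sub (integrable_const _) hX, hmean]

/-- `μ` is the law of the amount received in an unbiased exchange with a partner of wealth `w`.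
The amount given away may be unbounded; only its mean has to be finite. -/
structure IsUnbiasedExchange (w : ℝ) (μ : Measure ℝ) : Prop where
  isProbabilityMeasure : IsProbabilityMeasure μ
  integrable : Integrable (fun Δ => Δ) μ
  ae_le : ∀ᵐ Δ ∂μ, Δ ≤ w
  integral_eq_zero : ∫ Δ, Δ ∂μ = 0

namespace IsUnbiasedExchange

theorem of_measure_compl_Icc_eq_zero {μ : Measure ℝ} [IsProbabilityMeasure μ] {a w : ℝ}
    (hsupp : μ (Set.Icc a w)ᶜ = 0) (hmean : ∫ Δ, Δ ∂μ = 0) : IsUnbiasedExchange w μ :=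
  have hmem : ∀ᵐ Δ ∂μ, Δ ∈ Set.Icc a w := mem_ae_iff.mpr hsupp
  ⟨inferInstance, .of_mem_Icc a w aemeasurable_id hmem, hmem.mono fun _ h => h.2, hmean⟩

theorem integral_abs_le {w : ℝ} {μ : Measure ℝ} (h : IsUnbiasedExchange w μ) :
    ∫ Δ, |Δ| ∂μ ≤ 2 * w :=
  have := h.isProbabilityMeasure
  integral_abs_le_two_mul_of_integral_eq_zero h.integrable h.ae_le h.integral_eq_zero

end IsUnbiasedExchange

theorem mobility_le_two_mul_mean_general {α : Type*} [MeasurableSpace α] {ν : Measure α}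
    {w : α → ℝ} (hw : Integrable w ν) {ω : α → Measure ℝ}
    (hω : ∀ᵐ a ∂ν, IsUnbiasedExchange (w a) (ω a)) :
    ∫ a, ∫ Δ, |Δ| ∂(ω a) ∂ν ≤ 2 * ∫ a, w a ∂ν := by
  rw [← integral_const_mul]
  exact integral_mono_of_nonneg (ae_of_all _ fun _ => integral_nonneg fun _ => abs_nonneg _)
    (hw.const_mul 2) (hω.mono fun _ h => h.integral_abs_le)

/-- In a system of unbiased binary exchanges, the mobility
`l(x) = ∫₀^∞ (∫ |Δ| d(ω x x')(Δ)) f(x') dx'` of agents with positive wealth `x`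
is bounded by twice the mean wealth: `l(x) ≤ 2 m`. -/
theorem mobility_le_two_mul_mean
    -- `f` is a wealth density:
    (f : ℝ → ℝ) (hf_meas : Measurable f) (hf_nonneg : ∀ x, 0 ≤ f x)
    (hf_neg : ∀ x < 0, f x = 0)
    (hf_norm : (∫ x in Set.Ioi (0:ℝ), f x) = 1)
    -- with mean wealth `m > 0`:
    (m : ℝ) (hm_def : m = ∫ x in Set.Ioi (0:ℝ), x * f x) (hm_pos : 0 < m)
    -- `ω` is an exchange kernel:
    (ω : ℝ → ℝ → Measure ℝ)
    (hω_prob : ∀ x x', 0 ≤ x → 0 ≤ x' → IsProbabilityMeasure (ω x x'))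
    (hω_supp : ∀ x x', 0 ≤ x → 0 ≤ x' → (ω x x') (Set.Icc (-x) x')ᶜ = 0)
    -- which is unbiased:
    (hω_unb : ∀ x x', 0 ≤ x → 0 ≤ x' → (∫ Δ, Δ ∂(ω x x')) = 0)
    (x : ℝ) (hx : 0 < x) :
    (∫ x' in Set.Ioi (0:ℝ), (∫ Δ, |Δ| ∂(ω x x')) * f x') ≤ 2 * m := by
  have hw : Integrable (fun x' => x' * f x') (volume.restrict (Set.Ioi 0)) :=
    .of_integral_ne_zero (hm_def ▸ hm_pos.ne')
  have hω : ∀ᵐ x' ∂volume.restrict (Set.Ioi 0), IsUnbiasedExchange x' (ω x x') := by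
    filter_upwards [ae_restrict_mem measurableSet_Ioi] with x' hx'
    have hx'_nonneg : 0 ≤ x' := le_of_lt hx'
    have := hω_prob x x' hx.le hx'_nonneg
    exact .of_measure_compl_Icc_eq_zero (hω_supp x x' hx.le hx'_nonneg)
      (hω_unb x x' hx.le hx'_nonneg)
  have hf : 0 ≤ᵐ[volume.restrict (Set.Ioi 0)] f := ae_of_all _ hf_nonneg
  simpa only [integral_withDensity_ofReal hf_meas.aemeasurable hf, ← hm_def] using
    mobility_le_two_mul_mean_general
      ((integrable_withDensity_ofReal_iff hf_meas.aemeasurable hf).mpr hw)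
      ((withDensity_absolutelyContinuous _ _).ae_le hω)
end

section
/- Let f be a wealth density with mean wealth m > 0, and let ω be an unbiased exchange kernel. Then the Gini production functional D = ∫₀^∞ ∫₀^∞ ∫₀^∞ f(x)·f(x')·f(x₁) · [ (∫ |x + Δ − x₁| d(ω x x')(Δ)) − |x − x₁| ] dx₁ dx' dx is nonnegative: D ≥ 0. -/
open MeasureTheory

/-!
An unbiased step satisfies `x - x₁ = 𝔼[x + Δ - x₁]`, so by the triangle inequality for integrals
it does not decrease the expected distance from `x` to any other wealth `x₁`. The bracket in the
integrand is therefore nonnegative pointwise.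
-/

theorem norm_le_integral_norm_add_of_integral_eq_zero {Ω E : Type*} [MeasurableSpace Ω]
    [NormedAddCommGroup E] [NormedSpace ℝ E] [CompleteSpace E] {μ : Measure Ω}
    [IsProbabilityMeasure μ] {X : Ω → E} (hX : Integrable X μ) (hmean : ∫ t, X t ∂μ = 0) (a : E) :
    ‖a‖ ≤ ∫ t, ‖a + X t‖ ∂μ := by
  have mean_add : ∫ t, (a + X t) ∂μ = a := by
    rw [integral_add (integrable_const a) hX, hmean, integral_const, probReal_univ, one_smul,
      add_zero]
  calc ‖a‖ = ‖∫ t, (a + X t) ∂μ‖ := by rw [mean_add]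
    _ ≤ ∫ t, ‖a + X t‖ ∂μ := norm_integral_le_integral_norm _

theorem abs_sub_le_integral_abs_add_sub_of_integral_eq_zero {μ : Measure ℝ}
    [IsProbabilityMeasure μ] (hint : Integrable (fun t ↦ t) μ) (hmean : ∫ t, t ∂μ = 0) (x y : ℝ) :
    |x - y| ≤ ∫ t, |x + t - y| ∂μ := by
  simpa only [Real.norm_eq_abs, sub_add_eq_add_sub] using
    norm_le_integral_norm_add_of_integral_eq_zero hint hmean (x - y)

theorem gini_production_nonneg_general {f : ℝ → ℝ} (hf_nonneg : ∀ x, 0 ≤ f x)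
    {ω : ℝ → ℝ → Measure ℝ}
    (hω_prob : ∀ x x', 0 ≤ x → 0 ≤ x' → IsProbabilityMeasure (ω x x'))
    (hω_int : ∀ x x', 0 ≤ x → 0 ≤ x' → Integrable (fun Δ ↦ Δ) (ω x x'))
    (hω_unb : ∀ x x', 0 ≤ x → 0 ≤ x' → (∫ Δ, Δ ∂(ω x x')) = 0) :
    0 ≤ ∫ x in Set.Ioi (0:ℝ), ∫ x' in Set.Ioi (0:ℝ), ∫ x₁ in Set.Ioi (0:ℝ),
          f x * f x' * f x₁ * ((∫ Δ, |x + Δ - x₁| ∂(ω x x')) - |x - x₁|) := by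
  refine setIntegral_nonneg measurableSet_Ioi fun x (hx : 0 < x) ↦
    setIntegral_nonneg measurableSet_Ioi fun x' (hx' : 0 < x') ↦ integral_nonneg fun x₁ ↦ ?_
  have := hω_prob x x' hx.le hx'.le
  have dist_le : |x - x₁| ≤ ∫ Δ, |x + Δ - x₁| ∂(ω x x') :=
    abs_sub_le_integral_abs_add_sub_of_integral_eq_zero (hω_int x x' hx.le hx'.le)
      (hω_unb x x' hx.le hx'.le) x x₁
  have density_nonneg : 0 ≤ f x * f x' * f x₁ :=
    mul_nonneg (mul_nonneg (hf_nonneg x) (hf_nonneg x')) (hf_nonneg x₁)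
  exact mul_nonneg density_nonneg (sub_nonneg.mpr dist_le)

/-- The Gini production functional
`D = ∫₀^∞∫₀^∞∫₀^∞ f(x) f(x') f(x₁) [(∫ |x+Δ-x₁| d(ω x x')(Δ)) - |x-x₁|] dx₁ dx' dx`
of a wealth density `f` under an unbiased exchange kernel `ω` is nonnegative. -/
theorem gini_production_nonneg
    -- `f` is a wealth density:
    (f : ℝ → ℝ) (hf_meas : Measurable f) (hf_nonneg : ∀ x, 0 ≤ f x)
    (hf_neg : ∀ x < 0, f x = 0)
    (hf_norm : (∫ x in Set.Ioi (0:ℝ), f x) = 1)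
    -- with mean wealth `m > 0`:
    (m : ℝ) (hm_def : m = ∫ x in Set.Ioi (0:ℝ), x * f x) (hm_pos : 0 < m)
    -- `ω` is an exchange kernel:
    (ω : ℝ → ℝ → Measure ℝ)
    (hω_prob : ∀ x x', 0 ≤ x → 0 ≤ x' → IsProbabilityMeasure (ω x x'))
    (hω_supp : ∀ x x', 0 ≤ x → 0 ≤ x' → (ω x x') (Set.Icc (-x) x')ᶜ = 0)
    -- which is unbiased:
    (hω_unb : ∀ x x', 0 ≤ x → 0 ≤ x' → (∫ Δ, Δ ∂(ω x x')) = 0) :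
    0 ≤ ∫ x in Set.Ioi (0:ℝ), ∫ x' in Set.Ioi (0:ℝ), ∫ x₁ in Set.Ioi (0:ℝ),
          f x * f x' * f x₁ * ((∫ Δ, |x + Δ - x₁| ∂(ω x x')) - |x - x₁|) :=
  gini_production_nonneg_general hf_nonneg hω_prob (fun x x' hx hx' ↦
    have := hω_prob x x' hx hx'
    .of_mem_Icc (-x) x' aemeasurable_id (mem_ae_iff.mpr (hω_supp x x' hx hx'))) hω_unb
end

section
/- Let f be a wealth density with mean wealth m > 0, and let ω be an unbiased exchange kernel. Then the liquidity L = (1/(2m)) ∫₀^∞ l(x) · f(x) dx satisfies 0 ≤ L ≤ 1, where l(x) = ∫₀^∞ (∫ |Δ| d(ω x x')(Δ)) · f(x') dx' is the mobility. -/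
open MeasureTheory

/-!
If agents with wealths `x` and `x'` can exchange at most what they own, the mean exchanged amount is
at most `x + x'`. Averaging a bound of the form "constant plus wealth" over the wealth density
replaces the wealth by its mean `m`: a first average gives mobility at most `x + m`, and a second
one gives total mobility at most `2 * m`.
-/

lemma integral_abs_le_max_abs_of_ae_mem_Icc {ν : Measure ℝ} [IsProbabilityMeasure ν] {a b : ℝ}
    (hν : ∀ᵐ t ∂ν, t ∈ Set.Icc a b) : ∫ t, |t| ∂ν ≤ max |a| |b| := by
  have h_abs : ∀ᵐ t ∂ν, ‖|t|‖ ≤ max |a| |b| := by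
    filter_upwards [hν] with t ht
    simpa only [Real.norm_eq_abs, abs_abs] using abs_le_max_abs_abs ht.1 ht.2
  simpa using (le_abs_self _).trans (norm_integral_le_of_norm_le_const h_abs)

lemma integral_abs_le_add_of_ae_mem_Icc_neg {ν : Measure ℝ} [IsProbabilityMeasure ν] {x x' : ℝ}
    (hx : 0 ≤ x) (hx' : 0 ≤ x') (hν : ∀ᵐ t ∂ν, t ∈ Set.Icc (-x) x') :
    ∫ t, |t| ∂ν ≤ x + x' :=
  calc ∫ t, |t| ∂ν ≤ max |-x| |x'| := integral_abs_le_max_abs_of_ae_mem_Icc hν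
    _ = max x x' := by rw [abs_neg, abs_of_nonneg hx, abs_of_nonneg hx']
    _ ≤ x + x' := max_le_add_of_nonneg hx hx'

lemma integral_mul_le_add_integral_mul {α : Type*} [MeasurableSpace α] {μ : Measure α}
    {f g h : α → ℝ} {c : ℝ} (hf_nonneg : 0 ≤ᵐ[μ] f) (hf_norm : ∫ x, f x ∂μ = 1)
    (hgf : Integrable (fun x => g x * f x) μ) (hh_nonneg : 0 ≤ᵐ[μ] h)
    (hh_le : ∀ᵐ x ∂μ, h x ≤ c + g x) :
    ∫ x, h x * f x ∂μ ≤ c + ∫ x, g x * f x ∂μ := by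
  have hf_int : Integrable f μ := .of_integral_ne_zero (hf_norm ▸ one_ne_zero)
  calc ∫ x, h x * f x ∂μ ≤ ∫ x, (c * f x + g x * f x) ∂μ := by
        refine integral_mono_of_nonneg ?_ ((hf_int.const_mul c).add hgf) ?_
        · filter_upwards [hh_nonneg, hf_nonneg] with x using mul_nonneg
        · filter_upwards [hh_le, hf_nonneg] with x hhx hfx
          rw [← add_mul]
          exact mul_le_mul_of_nonneg_right hhx hfx
    _ = c + ∫ x, g x * f x ∂μ := by
        rw [integral_add (hf_int.const_mul c) hgf, integral_const_mul, hf_norm, mul_one]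

/-- The mobility of an agent with wealth `x`: the mean amount it exchanges under the kernel `ω` with
a random partner. Wealth has density `f` with respect to an arbitrary base measure `μ`, so that
discrete distributions are included. -/
noncomputable def mobility (μ : Measure ℝ) (f : ℝ → ℝ) (ω : ℝ → ℝ → Measure ℝ) (x : ℝ) : ℝ :=
  ∫ x', (∫ Δ, |Δ| ∂(ω x x')) * f x' ∂μ

/-- The liquidity of an economy with exchange kernel `ω` and wealth density `f` with respect to `μ`:
the fraction of the mean wealth exchanged per unit time. The factor `1 / 2` is there because the
mean mobility counts each exchange once for each of its two partners. -/
noncomputable def liquidity (μ : Measure ℝ) (f : ℝ → ℝ) (ω : ℝ → ℝ → Measure ℝ) : ℝ :=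
  (1 / (2 * ∫ x, x * f x ∂μ)) * ∫ x, mobility μ f ω x * f x ∂μ

section

variable {μ : Measure ℝ} {f : ℝ → ℝ} {ω : ℝ → ℝ → Measure ℝ}

lemma mobility_nonneg (hf_nonneg : 0 ≤ᵐ[μ] f) (x : ℝ) : 0 ≤ mobility μ f ω x := by
  refine integral_nonneg_of_ae ?_
  filter_upwards [hf_nonneg] with x' hfx'
  exact mul_nonneg (integral_nonneg fun Δ => abs_nonneg Δ) hfx'

lemma liquidity_nonneg (hf_nonneg : 0 ≤ᵐ[μ] f) (hm_nonneg : 0 ≤ ∫ x, x * f x ∂μ) :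
    0 ≤ liquidity μ f ω := by
  refine mul_nonneg (by positivity) (integral_nonneg_of_ae ?_)
  filter_upwards [hf_nonneg] with x hfx
  exact mul_nonneg (mobility_nonneg hf_nonneg x) hfx

lemma mobility_le_add_mean (hμ : ∀ᵐ x ∂μ, 0 ≤ x) (hf_nonneg : 0 ≤ᵐ[μ] f)
    (hf_norm : ∫ x, f x ∂μ = 1) (hxf : Integrable (fun x => x * f x) μ) {x : ℝ} (hx : 0 ≤ x)
    (hω_prob : ∀ x', 0 ≤ x' → IsProbabilityMeasure (ω x x'))
    (hω_supp : ∀ x', 0 ≤ x' → ∀ᵐ Δ ∂(ω x x'), Δ ∈ Set.Icc (-x) x') :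
    mobility μ f ω x ≤ x + ∫ x', x' * f x' ∂μ := by
  refine integral_mul_le_add_integral_mul hf_nonneg hf_norm hxf
    (.of_forall fun x' => integral_nonneg fun Δ => abs_nonneg Δ) ?_
  filter_upwards [hμ] with x' hx'
  have := hω_prob x' hx'
  exact integral_abs_le_add_of_ae_mem_Icc_neg hx hx' (hω_supp x' hx')

lemma integral_mobility_mul_le_two_mul_mean (hμ : ∀ᵐ x ∂μ, 0 ≤ x) (hf_nonneg : 0 ≤ᵐ[μ] f)
    (hf_norm : ∫ x, f x ∂μ = 1) (hxf : Integrable (fun x => x * f x) μ)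
    (hω_prob : ∀ x x', 0 ≤ x → 0 ≤ x' → IsProbabilityMeasure (ω x x'))
    (hω_supp : ∀ x x', 0 ≤ x → 0 ≤ x' → ∀ᵐ Δ ∂(ω x x'), Δ ∈ Set.Icc (-x) x') :
    ∫ x, mobility μ f ω x * f x ∂μ ≤ 2 * ∫ x, x * f x ∂μ := by
  rw [two_mul]
  refine integral_mul_le_add_integral_mul hf_nonneg hf_norm hxf
    (.of_forall (mobility_nonneg hf_nonneg)) ?_
  filter_upwards [hμ] with x hx
  rw [add_comm]
  exact mobility_le_add_mean hμ hf_nonneg hf_norm hxf hx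
    (fun x' => hω_prob x x' hx) (fun x' => hω_supp x x' hx)

theorem liquidity_mem_unit_interval_general (hμ : ∀ᵐ x ∂μ, 0 ≤ x) (hf_nonneg : 0 ≤ᵐ[μ] f)
    (hf_norm : ∫ x, f x ∂μ = 1) (hm_pos : 0 < ∫ x, x * f x ∂μ)
    (hω_prob : ∀ x x', 0 ≤ x → 0 ≤ x' → IsProbabilityMeasure (ω x x'))
    (hω_supp : ∀ x x', 0 ≤ x → 0 ≤ x' → ∀ᵐ Δ ∂(ω x x'), Δ ∈ Set.Icc (-x) x') :
    0 ≤ liquidity μ f ω ∧ liquidity μ f ω ≤ 1 := by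
  refine ⟨liquidity_nonneg hf_nonneg hm_pos.le, ?_⟩
  rw [liquidity, one_div_mul_eq_div, div_le_one (by positivity)]
  exact integral_mobility_mul_le_two_mul_mean hμ hf_nonneg hf_norm
    (.of_integral_ne_zero hm_pos.ne') hω_prob hω_supp

end

/-- The liquidity `L = (1/(2m)) ∫₀^∞ l(x) f(x) dx` of a wealth density `f` under an
unbiased exchange kernel `ω`, where `l` is the mobility, satisfies `0 ≤ L ≤ 1`. -/
theorem liquidity_mem_unit_interval
    -- `f` is a wealth density:
    (f : ℝ → ℝ) (hf_meas : Measurable f) (hf_nonneg : ∀ x, 0 ≤ f x)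
    (hf_neg : ∀ x < 0, f x = 0)
    (hf_norm : (∫ x in Set.Ioi (0:ℝ), f x) = 1)
    -- with mean wealth `m > 0`:
    (m : ℝ) (hm_def : m = ∫ x in Set.Ioi (0:ℝ), x * f x) (hm_pos : 0 < m)
    -- `ω` is an exchange kernel:
    (ω : ℝ → ℝ → Measure ℝ)
    (hω_prob : ∀ x x', 0 ≤ x → 0 ≤ x' → IsProbabilityMeasure (ω x x'))
    (hω_supp : ∀ x x', 0 ≤ x → 0 ≤ x' → (ω x x') (Set.Icc (-x) x')ᶜ = 0)
    -- which is unbiased: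
    (hω_unb : ∀ x x', 0 ≤ x → 0 ≤ x' → (∫ Δ, Δ ∂(ω x x')) = 0)
    -- the mobility `l`:
    (l : ℝ → ℝ)
    (hl_def : ∀ x, l x = ∫ x' in Set.Ioi (0:ℝ), (∫ Δ, |Δ| ∂(ω x x')) * f x')
    -- the liquidity `L`:
    (L : ℝ)
    (hL_def : L = (1 / (2 * m)) * ∫ x in Set.Ioi (0:ℝ), l x * f x) :
    0 ≤ L ∧ L ≤ 1 := by
  obtain rfl : l = mobility (volume.restrict (Set.Ioi 0)) f ω := funext hl_def
  subst hm_def hL_def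
  exact liquidity_mem_unit_interval_general
    (ae_restrict_of_forall_mem measurableSet_Ioi fun _ hx => (Set.mem_Ioi.mp hx).le)
    (.of_forall hf_nonneg) hf_norm hm_pos hω_prob hω_supp
end
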